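/- With the same reduced dynamic programming system and U concave (and nondecreasing), for every k the map r ↦ w_k(r, μ) is concave on [q,1]: for r_1, r_2 ∈ [q,1] and λ ∈ (0,1), w_k(λr_1 + (1−λ)r_2, μ) ≥ λ w_k(r_1,μ) + (1−λ) w_k(r_2,μ). -/

import Mathlib

open MeasureTheory

/-!
Measure an investment by the holdings `h ∈ (r - q) • K` (the wealth proportions times `r`) instead
of the proportions, where `K` is the convex set of portfolios. Then the uncapped next ratio is
linear in the pair `(r, h)` and, `K` being convex, the admissible pairs form a convex set. Capping
the ratio at `1` before applying a concave nondecreasing function keeps concavity in `(r, h)`,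
integration preserves it, and so does partial maximization over `h`. Since `K` also contains `0`,
the admissible sets grow with `r`, which keeps the value nondecreasing.

All integrals have to converge for this. The compactness of `K` gives a value function that is
continuous in `r` and measurable in the belief, and the expected mass of the unnormalized posterior
is the mass of the prior, so a bound by a multiple of the mass passes from each stage to the
previous one.
-/

open ProbabilityTheory Set
open scoped ENNReal Pointwise

section Concavity

variable {V W : Type*} [AddCommGroup V] [Module ℝ V] [AddCommGroup W] [Module ℝ W]

lemma concaveOn_comp_min_const {q c : ℝ} (hqc : q ≤ c) {f : ℝ → ℝ}
    (hf : ConcaveOn ℝ (Icc q c) f) (hmono : MonotoneOn f (Icc q c)) :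
    ConcaveOn ℝ (Ici q) fun t => f (min c t) := by
  have himage : (fun t => min c t) '' Ici q = Icc q c := by
    refine Subset.antisymm ?_ fun t ht => ⟨t, ht.1, min_eq_right ht.2⟩
    rintro _ ⟨t, ht, rfl⟩
    exact ⟨le_min hqc ht, min_le_left c t⟩
  have hmin : ConcaveOn ℝ (Ici q) fun t => min c t :=
    (concaveOn_const c (convex_Ici q)).inf (concaveOn_id (convex_Ici q))
  exact ConcaveOn.comp (himage ▸ hf) hmin (himage ▸ hmono)

lemma concaveOn_integral {X : Type*} [MeasurableSpace X] {ν : Measure X} {s : Set V}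
    (hs : Convex ℝ s) {f : X → V → ℝ} (hf : ∀ᵐ x ∂ν, ConcaveOn ℝ s (f x))
    (hint : ∀ v ∈ s, Integrable (fun x => f x v) ν) :
    ConcaveOn ℝ s fun v => ∫ x, f x v ∂ν := by
  refine ⟨hs, fun v hv w hw a b ha hb hab => ?_⟩
  have hv' := (hint v hv).const_mul a
  have hw' := (hint w hw).const_mul b
  simp only [smul_eq_mul]
  rw [← integral_const_mul, ← integral_const_mul, ← integral_add hv' hw']
  refine integral_mono_ae (hv'.add hw') (hint _ (hs hv hw ha hb hab)) ?_
  filter_upwards [hf] with x hx using hx.2 hv hw ha hb hab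

lemma concaveOn_sSup_image {t : Set V} {H : V → Set W} {f : V × W → ℝ}
    (hf : ConcaveOn ℝ {p | p.1 ∈ t ∧ p.2 ∈ H p.1} f) (hne : ∀ v ∈ t, (H v).Nonempty)
    (hbdd : ∀ v ∈ t, BddAbove ((fun w => f (v, w)) '' H v)) :
    ConcaveOn ℝ t fun v => sSup ((fun w => f (v, w)) '' H v) := by
  have ht : Convex ℝ t := fun v₁ hv₁ v₂ hv₂ a b ha hb hab =>
    let ⟨_, hw₁⟩ := hne v₁ hv₁
    let ⟨_, hw₂⟩ := hne v₂ hv₂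
    (hf.1 (x := (v₁, _)) ⟨hv₁, hw₁⟩ (y := (v₂, _)) ⟨hv₂, hw₂⟩ ha hb hab).1
  refine ⟨ht, fun v₁ hv₁ v₂ hv₂ a b ha hb hab => ?_⟩
  have hne₁ := (hne v₁ hv₁).image fun w => f (v₁, w)
  have hne₂ := (hne v₂ hv₂).image fun w => f (v₂, w)
  simp only
  rw [← Real.sSup_smul_of_nonneg ha, ← Real.sSup_smul_of_nonneg hb,
    ← csSup_add hne₁.smul_set ((hbdd v₁ hv₁).smul_of_nonneg ha)
      hne₂.smul_set ((hbdd v₂ hv₂).smul_of_nonneg hb)]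
  refine csSup_le (hne₁.smul_set.add hne₂.smul_set) ?_
  rintro _ ⟨_, ⟨_, ⟨w₁, hw₁, rfl⟩, rfl⟩, _, ⟨_, ⟨w₂, hw₂, rfl⟩, rfl⟩, rfl⟩
  have h₁ : (v₁, w₁) ∈ {p : V × W | p.1 ∈ t ∧ p.2 ∈ H p.1} := ⟨hv₁, hw₁⟩
  have h₂ : (v₂, w₂) ∈ {p : V × W | p.1 ∈ t ∧ p.2 ∈ H p.1} := ⟨hv₂, hw₂⟩
  exact (hf.2 h₁ h₂ ha hb hab).trans (le_csSup (hbdd _ (ht hv₁ hv₂ ha hb hab))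
    ⟨a • w₁ + b • w₂, (hf.1 h₁ h₂ ha hb hab).2, rfl⟩)

end Concavity

section Measurability

lemma measurable_iSup_of_continuous {S Y : Type*} [TopologicalSpace S]
    [TopologicalSpace.SeparableSpace S] [MeasurableSpace Y] {f : S → Y → ℝ}
    (hmeas : ∀ s, Measurable (f s)) (hcont : ∀ y, Continuous fun s => f s y) :
    Measurable fun y => ⨆ s, f s y := by
  obtain ⟨D, hD, hdense⟩ := TopologicalSpace.exists_countable_dense S
  have := hD.to_subtype
  simp only [← fun y => hdense.ciSup' (hcont y)]
  exact Measurable.iSup fun s => hmeas s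

lemma isSFiniteKernel_of_isFiniteMeasure {Y Z : Type*} [MeasurableSpace Y] [MeasurableSpace Z]
    (κ : Kernel Y Z) (hκ : ∀ y, IsFiniteMeasure (κ y)) : IsSFiniteKernel κ := by
  classical
  let layer (n : ℕ) : Set Y := {y | ⌊(κ y).real univ⌋₊ = n}
  have hlayer (n : ℕ) : MeasurableSet (layer n) :=
    (Nat.measurable_floor.comp (κ.measurable_coe .univ).ennreal_toReal) (measurableSet_singleton n)
  refine ⟨fun n => Kernel.piecewise (hlayer n) κ 0,
    fun n => ⟨⟨n + 1, by finiteness, fun y => ?_⟩⟩, ?_⟩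
  · rw [Kernel.piecewise_apply']
    split_ifs with hy
    · rw [← ofReal_measureReal]
      have h : (κ y).real univ ≤ n + 1 := by
        have := Nat.lt_floor_add_one ((κ y).real univ)
        rw [show ⌊(κ y).real univ⌋₊ = n from hy] at this
        exact this.le
      exact (ENNReal.ofReal_le_ofReal h).trans_eq (by rw [ENNReal.ofReal_add] <;> simp)
    · simp
  · ext y t ht
    rw [Kernel.sum_apply' _ _ ht, tsum_eq_single ⌊(κ y).real univ⌋₊]
    · rw [Kernel.piecewise_apply', if_pos (show y ∈ layer _ from rfl)]
    · intro n hn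
      rw [Kernel.piecewise_apply', if_neg (show y ∉ layer n from hn.symm)]
      simp

lemma measurable_finiteMeasure_withDensity {X Θ : Type*} [MeasurableSpace X] [MeasurableSpace Θ]
    {f : X → Θ → ℝ≥0∞} (hf : Measurable (Function.uncurry f)) :
    Measurable fun p : FiniteMeasure Θ × X => (p.1 : Measure Θ).withDensity (f p.2) := by
  let κ : Kernel (FiniteMeasure Θ × X) Θ :=
    ⟨fun p => p.1, measurable_subtype_coe.comp measurable_fst⟩
  have : IsSFiniteKernel κ := isSFiniteKernel_of_isFiniteMeasure κ fun p =>
    inferInstanceAs (IsFiniteMeasure (p.1 : Measure Θ))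
  refine Measure.measurable_of_measurable_coe _ fun s hs => ?_
  simp only [withDensity_apply _ hs]
  have hf' : Measurable (Function.uncurry fun (p : FiniteMeasure Θ × X) b => f p.2 b) :=
    hf.comp ((measurable_snd.comp measurable_fst).prodMk measurable_snd)
  exact hf'.setLIntegral_kernel_prod_right (κ := κ) hs

end Measurability

/-- A market with Bayesian learning: `E` is the space of portfolios, `X` the space of observations
and `Θ` the space of unknown parameters. The likelihood is a density with respect to the reference
law of the observations, and the return `excessReturn x a` of the portfolio `a` is taken net of the
initial capital. -/
structure LearningMarket (E X Θ : Type*) [NormedAddCommGroup E] [NormedSpace ℝ E]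
    [MeasurableSpace X] [MeasurableSpace Θ] where
  portfolios : Set E
  isCompact_portfolios : IsCompact portfolios
  convex_portfolios : Convex ℝ portfolios
  zero_mem_portfolios : 0 ∈ portfolios
  excessReturn : X → E →L[ℝ] ℝ
  measurable_excessReturn : ∀ a, Measurable fun x => excessReturn x a
  neg_one_le_excessReturn : ∀ x, ∀ a ∈ portfolios, -1 ≤ excessReturn x a
  law : Measure X
  sFinite_law : SFinite law
  likelihood : X → Θ → ℝ≥0∞
  measurable_likelihood : Measurable (Function.uncurry likelihood)
  lintegral_likelihood : ∀ b, ∫⁻ x, likelihood x b ∂law = 1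

/-- The regularity of a value function `F r μ`, depending on the ratio `r` and on the unnormalized
belief `μ`, that dynamic programming preserves. Since `μ.real univ = 0` when `μ univ = ∞`, the bound
forces `F` to vanish at infinite measures. -/
structure IsRegularValue {Θ : Type*} [MeasurableSpace Θ] (q : ℝ) (F : ℝ → Measure Θ → ℝ) :
    Prop where
  measurable : ∀ r, Measurable (F r)
  continuous : ∀ μ, Continuous fun r => F r μ
  exists_bound : ∃ C, ∀ r μ, |F r μ| ≤ C * μ.real univ
  monotoneOn : ∀ μ, MonotoneOn (fun r => F r μ) (Icc q 1)
  concaveOn : ∀ μ, ConcaveOn ℝ (Icc q 1) fun r => F r μ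

namespace LearningMarket

variable {E X Θ : Type*} [NormedAddCommGroup E] [NormedSpace ℝ E] [MeasurableSpace X]
  [MeasurableSpace Θ] (M : LearningMarket E X Θ) {q r : ℝ} {F G : ℝ → Measure Θ → ℝ}

attribute [instance] sFinite_law

/-- The unnormalized posterior belief after observing `x` under the prior belief `μ`. -/
noncomputable def posterior (μ : Measure Θ) (x : X) : Measure Θ :=
  μ.withDensity (M.likelihood x)

/-- The holdings admissible at the ratio `r` when the floor `q` must be protected: a portfolio
scaled by the cushion `r - q`. A holding is `r` times the vector of proportions of wealth. -/
def holdings (q r : ℝ) : Set E := (r - q) • M.portfolios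

/-- The ratio, capped at `1`, reached from `r` with holdings `h` when `x` is observed. -/
noncomputable def nextRatio (r : ℝ) (h : E) (x : X) : ℝ := min 1 (r + M.excessReturn x h)

/-- The expected value of continuing with the value function `F` from the ratio `r` with holdings
`h` and belief `μ`. -/
noncomputable def continuationValue (F : ℝ → Measure Θ → ℝ) (r : ℝ) (h : E) (μ : Measure Θ) : ℝ :=
  ∫ x, F (M.nextRatio r h x) (M.posterior μ x) ∂M.law

/-- The Bellman operator: the best continuation value over the admissible holdings. -/
noncomputable def bellman (q : ℝ) (F : ℝ → Measure Θ → ℝ) (r : ℝ) (μ : Measure Θ) : ℝ :=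
  sSup ((fun h => M.continuationValue F r h μ) '' M.holdings q r)

section Posterior

lemma measurable_posterior :
    Measurable fun p : FiniteMeasure Θ × X => M.posterior p.1 p.2 :=
  measurable_finiteMeasure_withDensity M.measurable_likelihood

variable (μ : Measure Θ) [IsFiniteMeasure μ]

lemma measurable_posterior_right : Measurable (M.posterior μ) :=
  measurable_withDensity M.measurable_likelihood

lemma measurable_posterior_univ : Measurable fun x => M.posterior μ x univ :=
  (Measure.measurable_coe .univ).comp (M.measurable_posterior_right μ)

lemma lintegral_posterior_univ : ∫⁻ x, M.posterior μ x univ ∂M.law = μ univ := by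
  simp only [posterior, withDensity_apply _ MeasurableSet.univ, setLIntegral_univ]
  rw [lintegral_lintegral_swap M.measurable_likelihood.aemeasurable]
  simp only [M.lintegral_likelihood, lintegral_one]

lemma lintegral_posterior_univ_ne_top : ∫⁻ x, M.posterior μ x univ ∂M.law ≠ ∞ :=
  M.lintegral_posterior_univ μ ▸ measure_ne_top μ univ

lemma ae_isFiniteMeasure_posterior : ∀ᵐ x ∂M.law, IsFiniteMeasure (M.posterior μ x) := by
  filter_upwards [ae_lt_top (M.measurable_posterior_univ μ) (M.lintegral_posterior_univ_ne_top μ)]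
    with x hx using ⟨hx⟩

lemma integrable_posterior_real_univ : Integrable (fun x => (M.posterior μ x).real univ) M.law :=
  integrable_toReal_of_lintegral_ne_top (M.measurable_posterior_univ μ).aemeasurable
    (M.lintegral_posterior_univ_ne_top μ)

lemma integral_posterior_real_univ : ∫ x, (M.posterior μ x).real univ ∂M.law = μ.real univ := by
  simp only [measureReal_def]
  rw [integral_toReal (M.measurable_posterior_univ μ).aemeasurable
    (ae_lt_top (M.measurable_posterior_univ μ) (M.lintegral_posterior_univ_ne_top μ)),
    lintegral_posterior_univ]

end Posterior

section Holdings

lemma zero_mem_holdings (q r : ℝ) : (0 : E) ∈ M.holdings q r :=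
  zero_mem_smul_set M.zero_mem_portfolios

lemma isCompact_holdings (q r : ℝ) : IsCompact (M.holdings q r) :=
  M.isCompact_portfolios.smul (r - q)

lemma holdings_subset_holdings {r₁ r₂ : ℝ} (h₁ : q ≤ r₁) (h : r₁ ≤ r₂) :
    M.holdings q r₁ ⊆ M.holdings q r₂ := by
  have hsplit : M.holdings q r₂ = M.holdings q r₁ + (r₂ - r₁) • M.portfolios := by
    rw [holdings, holdings, ← M.convex_portfolios.add_smul (sub_nonneg.2 h₁) (sub_nonneg.2 h)]
    congr 1
    ring
  rw [hsplit]
  exact subset_add_left _ (zero_mem_smul_set M.zero_mem_portfolios)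

lemma convex_setOf_mem_holdings (q : ℝ) :
    Convex ℝ {p : ℝ × E | p.1 ∈ Ici q ∧ p.2 ∈ M.holdings q p.1} := by
  rintro ⟨r₁, h₁⟩ ⟨hr₁, hh₁⟩ ⟨r₂, h₂⟩ ⟨hr₂, hh₂⟩ a b ha hb hab
  refine ⟨convex_Ici q hr₁ hr₂ ha hb hab, ?_⟩
  have hcushion : a • r₁ + b • r₂ - q = a * (r₁ - q) + b * (r₂ - q) := by
    simp only [smul_eq_mul]
    linear_combination q * hab
  change a • h₁ + b • h₂ ∈ (a • r₁ + b • r₂ - q) • M.portfolios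
  rw [hcushion, M.convex_portfolios.add_smul (mul_nonneg ha (sub_nonneg.2 hr₁))
    (mul_nonneg hb (sub_nonneg.2 hr₂)), mul_smul, mul_smul]
  exact add_mem_add (smul_mem_smul_set hh₁) (smul_mem_smul_set hh₂)

lemma le_add_excessReturn (hr : q ≤ r) {h : E} (hh : h ∈ M.holdings q r) (x : X) :
    q ≤ r + M.excessReturn x h := by
  obtain ⟨a, ha, rfl⟩ := hh
  have hloss := mul_le_mul_of_nonneg_left (M.neg_one_le_excessReturn x a ha) (sub_nonneg.2 hr)
  simp only [map_smul, smul_eq_mul]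
  linarith

lemma nextRatio_mem_Icc (hq : q ≤ 1) (hr : q ≤ r) {h : E} (hh : h ∈ M.holdings q r) (x : X) :
    M.nextRatio r h x ∈ Icc q 1 :=
  ⟨le_min hq (M.le_add_excessReturn hr hh x), min_le_left _ _⟩

lemma measurable_nextRatio (r : ℝ) (h : E) : Measurable (M.nextRatio r h) :=
  measurable_const.min (measurable_const.add (M.measurable_excessReturn h))

lemma continuous_nextRatio (x : X) : Continuous fun p : ℝ × E => M.nextRatio p.1 p.2 x := by
  unfold nextRatio
  fun_prop

end Holdings

section Bellman

lemma bellman_eq_sSup_portfolios (q : ℝ) (F : ℝ → Measure Θ → ℝ) (r : ℝ) (μ : Measure Θ) :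
    M.bellman q F r μ =
      sSup ((fun a => M.continuationValue F r ((r - q) • a) μ) '' M.portfolios) := by
  rw [bellman, holdings, ← image_smul, image_image]

lemma bellman_eq_sSup_proportions (q : ℝ) (F : ℝ → Measure Θ → ℝ) (hr : r ≠ 0) (μ : Measure Θ) :
    M.bellman q F r μ = sSup ((fun a => ∫ x, F (min 1 (r * (1 + M.excessReturn x a)))
      (M.posterior μ x) ∂M.law) '' ((1 - q / r) • M.portfolios)) := by
  have hholdings : M.holdings q r = (fun a => r • a) '' ((1 - q / r) • M.portfolios) := by
    rw [holdings, image_smul, smul_smul, mul_one_sub, mul_div_cancel₀ q hr]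
  rw [bellman, hholdings, image_image]
  simp only [continuationValue, nextRatio, map_smul, smul_eq_mul, mul_one_add]

lemma bellman_congr (hq : q ≤ 1) (hr : q ≤ r) (μ : Measure Θ) [IsFiniteMeasure μ]
    (hFG : ∀ μ : Measure Θ, IsFiniteMeasure μ → ∀ t ∈ Icc q 1, F t μ = G t μ) :
    M.bellman q F r μ = M.bellman q G r μ := by
  refine congrArg sSup (image_congr fun h hh => integral_congr_ae ?_)
  filter_upwards [M.ae_isFiniteMeasure_posterior μ] with x hx
  exact hFG _ hx _ (M.nextRatio_mem_Icc hq hr hh x)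

end Bellman

end LearningMarket

namespace IsRegularValue

variable {E X Θ : Type*} [NormedAddCommGroup E] [NormedSpace ℝ E] [MeasurableSpace X]
  [MeasurableSpace Θ] (M : LearningMarket E X Θ) {q : ℝ} {F : ℝ → Measure Θ → ℝ}

lemma measurable_uncurry (hF : IsRegularValue q F) : Measurable (Function.uncurry F) :=
  measurable_uncurry_of_continuous_of_measurable hF.continuous hF.measurable

lemma integrable_nextRatio_posterior (hF : IsRegularValue q F) (μ : Measure Θ) [IsFiniteMeasure μ]
    (r : ℝ) (h : E) :
    Integrable (fun x => F (M.nextRatio r h x) (M.posterior μ x)) M.law := by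
  obtain ⟨C, hC⟩ := hF.exists_bound
  refine ((M.integrable_posterior_real_univ μ).const_mul C).mono'
    (Measurable.aestronglyMeasurable ?_) (ae_of_all _ fun x => hC _ _)
  exact hF.measurable_uncurry.comp
    ((M.measurable_nextRatio r h).prodMk (M.measurable_posterior_right μ))

lemma measurable_continuationValue (hF : IsRegularValue q F) (r : ℝ) (h : E) :
    Measurable fun μ : FiniteMeasure Θ => M.continuationValue F r h μ := by
  have hjoint : Measurable fun p : FiniteMeasure Θ × X =>
      F (M.nextRatio r h p.2) (M.posterior p.1 p.2) :=
    hF.measurable_uncurry.comp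
      (((M.measurable_nextRatio r h).comp measurable_snd).prodMk M.measurable_posterior)
  exact hjoint.stronglyMeasurable.integral_prod_right'.measurable

lemma continuous_continuationValue (hF : IsRegularValue q F) (μ : Measure Θ) [IsFiniteMeasure μ] :
    Continuous fun p : ℝ × E => M.continuationValue F p.1 p.2 μ := by
  obtain ⟨C, hC⟩ := hF.exists_bound
  exact continuous_of_dominated
    (fun p => (hF.integrable_nextRatio_posterior M μ p.1 p.2).aestronglyMeasurable)
    (fun p => ae_of_all _ fun x => hC _ _)
    ((M.integrable_posterior_real_univ μ).const_mul C)
    (ae_of_all _ fun x => (hF.continuous _).comp (M.continuous_nextRatio x))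

lemma abs_continuationValue_le (hF : IsRegularValue q F) {C : ℝ}
    (hC : ∀ r μ, |F r μ| ≤ C * μ.real univ) (r : ℝ) (h : E) (μ : Measure Θ) [IsFiniteMeasure μ] :
    |M.continuationValue F r h μ| ≤ C * μ.real univ := by
  rw [← M.integral_posterior_real_univ μ, ← integral_const_mul]
  exact abs_integral_le_integral_abs.trans
    (integral_mono (hF.integrable_nextRatio_posterior M μ r h).abs
      ((M.integrable_posterior_real_univ μ).const_mul C) fun x => hC _ _)

lemma bddAbove_continuationValue (hF : IsRegularValue q F) (r : ℝ) (μ : Measure Θ)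
    [IsFiniteMeasure μ] :
    BddAbove ((fun h => M.continuationValue F r h μ) '' M.holdings q r) :=
  (M.isCompact_holdings q r).bddAbove_image
    ((hF.continuous_continuationValue M μ).comp (Continuous.prodMk_right r)).continuousOn

lemma continuationValue_le_continuationValue (hF : IsRegularValue q F) (hq : q ≤ 1) {r₁ r₂ : ℝ}
    (h₁ : q ≤ r₁) (h₁₂ : r₁ ≤ r₂) {h : E} (hh : h ∈ M.holdings q r₁) (μ : Measure Θ)
    [IsFiniteMeasure μ] :
    M.continuationValue F r₁ h μ ≤ M.continuationValue F r₂ h μ := by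
  refine integral_mono (hF.integrable_nextRatio_posterior M μ r₁ h)
    (hF.integrable_nextRatio_posterior M μ r₂ h) fun x => hF.monotoneOn _
      (M.nextRatio_mem_Icc hq h₁ hh x)
      (M.nextRatio_mem_Icc hq (h₁.trans h₁₂) (M.holdings_subset_holdings h₁ h₁₂ hh) x) ?_
  exact min_le_min_left 1 (add_le_add_left h₁₂ _)

lemma concaveOn_continuationValue (hF : IsRegularValue q F) (hq : q ≤ 1) (μ : Measure Θ)
    [IsFiniteMeasure μ] :
    ConcaveOn ℝ {p : ℝ × E | p.1 ∈ Ici q ∧ p.2 ∈ M.holdings q p.1}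
      fun p => M.continuationValue F p.1 p.2 μ := by
  refine concaveOn_integral (M.convex_setOf_mem_holdings q) (ae_of_all _ fun x => ?_)
    fun p _ => hF.integrable_nextRatio_posterior M μ p.1 p.2
  have hcapped := concaveOn_comp_min_const hq (hF.concaveOn (M.posterior μ x))
    (hF.monotoneOn (M.posterior μ x))
  exact (hcapped.comp_linearMap (LinearMap.id.coprod (M.excessReturn x).toLinearMap)).subset
    (fun p hp => M.le_add_excessReturn hp.1 hp.2 x) (M.convex_setOf_mem_holdings q)

lemma measurable_bellman (hF : IsRegularValue q F) (r : ℝ) :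
    Measurable fun μ : FiniteMeasure Θ => M.bellman q F r μ := by
  have : CompactSpace M.portfolios := isCompact_iff_compactSpace.1 M.isCompact_portfolios
  simp only [M.bellman_eq_sSup_portfolios, sSup_image']
  refine measurable_iSup_of_continuous
    (fun a => hF.measurable_continuationValue M r ((r - q) • (a : E))) fun μ => ?_
  have hholding : Continuous fun a : M.portfolios => (r, (r - q) • (a : E)) := by fun_prop
  exact (hF.continuous_continuationValue M (μ : Measure Θ)).comp hholding

lemma continuous_bellman (hF : IsRegularValue q F) (μ : Measure Θ) [IsFiniteMeasure μ] :
    Continuous fun r => M.bellman q F r μ := by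
  simp only [M.bellman_eq_sSup_portfolios]
  have hholding : Continuous fun p : ℝ × E => (p.1, (p.1 - q) • p.2) := by fun_prop
  exact M.isCompact_portfolios.continuous_sSup
    ((hF.continuous_continuationValue M μ).comp hholding)

lemma abs_bellman_le (hF : IsRegularValue q F) {C : ℝ} (hC : ∀ r μ, |F r μ| ≤ C * μ.real univ)
    (r : ℝ) (μ : Measure Θ) [IsFiniteMeasure μ] :
    |M.bellman q F r μ| ≤ C * μ.real univ := by
  have hvalue (h : E) := abs_le.1 (hF.abs_continuationValue_le M hC r h μ)
  refine abs_le.2 ⟨(hvalue 0).1.trans (le_csSup (hF.bddAbove_continuationValue M r μ)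
    (mem_image_of_mem _ (M.zero_mem_holdings q r))),
    csSup_le ((nonempty_of_mem (M.zero_mem_holdings q r)).image _) ?_⟩
  rintro _ ⟨h, -, rfl⟩
  exact (hvalue h).2

lemma monotoneOn_bellman (hF : IsRegularValue q F) (hq : q ≤ 1) (μ : Measure Θ)
    [IsFiniteMeasure μ] : MonotoneOn (fun r => M.bellman q F r μ) (Ici q) := by
  intro r₁ h₁ r₂ _ h₁₂
  refine csSup_le ((nonempty_of_mem (M.zero_mem_holdings q r₁)).image _) ?_
  rintro _ ⟨h, hh, rfl⟩
  exact (hF.continuationValue_le_continuationValue M hq h₁ h₁₂ hh μ).trans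
    (le_csSup (hF.bddAbove_continuationValue M r₂ μ)
      (mem_image_of_mem _ (M.holdings_subset_holdings h₁ h₁₂ hh)))

lemma concaveOn_bellman (hF : IsRegularValue q F) (hq : q ≤ 1) (μ : Measure Θ)
    [IsFiniteMeasure μ] : ConcaveOn ℝ (Ici q) fun r => M.bellman q F r μ :=
  concaveOn_sSup_image (hF.concaveOn_continuationValue M hq μ)
    (fun r _ => ⟨0, M.zero_mem_holdings q r⟩) fun r _ => hF.bddAbove_continuationValue M r μ

lemma indicator_bellman (hF : IsRegularValue q F) (hq : q ≤ 1) :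
    IsRegularValue q fun r => {μ | IsFiniteMeasure μ}.indicator (M.bellman q F r) where
  measurable r := by
    refine measurable_of_restrict_of_restrict_compl
      FiniteMeasure.measurableSet_isFiniteMeasure ?_ ?_
    · convert! hF.measurable_bellman M r using 1
      exact funext fun μ => indicator_of_mem μ.2 _
    · convert! measurable_zero using 1
      exact funext fun μ => indicator_of_notMem μ.2 _
  continuous μ := by
    by_cases hμ : μ ∈ {μ | IsFiniteMeasure μ}
    · have : IsFiniteMeasure μ := hμ
      simpa only [indicator_of_mem hμ] using hF.continuous_bellman M μ
    · simpa only [indicator_of_notMem hμ] using continuous_const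
  exists_bound := by
    obtain ⟨C, hC⟩ := hF.exists_bound
    refine ⟨C, fun r μ => ?_⟩
    by_cases hμ : μ ∈ {μ | IsFiniteMeasure μ}
    · have : IsFiniteMeasure μ := hμ
      simpa only [indicator_of_mem hμ] using hF.abs_bellman_le M hC r μ
    · simpa only [indicator_of_notMem hμ, abs_zero] using (abs_nonneg _).trans (hC r μ)
  monotoneOn μ := by
    by_cases hμ : μ ∈ {μ | IsFiniteMeasure μ}
    · have : IsFiniteMeasure μ := hμ
      simpa only [indicator_of_mem hμ] using
        (hF.monotoneOn_bellman M hq μ).mono Icc_subset_Ici_self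
    · simpa only [indicator_of_notMem hμ] using monotoneOn_const
  concaveOn μ := by
    by_cases hμ : μ ∈ {μ | IsFiniteMeasure μ}
    · have : IsFiniteMeasure μ := hμ
      simpa only [indicator_of_mem hμ] using
        (hF.concaveOn_bellman M hq μ).subset Icc_subset_Ici_self (convex_Icc q 1)
    · simpa only [indicator_of_notMem hμ] using concaveOn_const 0 (convex_Icc q 1)

end IsRegularValue

lemma isRegularValue_terminal {Θ : Type*} [MeasurableSpace Θ] {q : ℝ} (hq : q ≤ 1) {U : ℝ → ℝ}
    (hcont : ContinuousOn U (Icc q 1)) (hmono : MonotoneOn U (Icc q 1))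
    (hconc : ConcaveOn ℝ (Icc q 1) U) :
    IsRegularValue q fun r (μ : Measure Θ) => U (projIcc q 1 hq r) * μ.real univ where
  measurable r := (Measure.measurable_coe .univ).ennreal_toReal.const_mul _
  continuous μ := (hcont.domRestrict.comp continuous_projIcc).mul_const _
  exists_bound := by
    obtain ⟨C, hC⟩ := isCompact_Icc.exists_bound_of_continuousOn hcont
    refine ⟨C, fun r μ => ?_⟩
    rw [abs_mul, abs_of_nonneg (measureReal_nonneg (μ := μ))]
    exact mul_le_mul_of_nonneg_right (hC _ (projIcc q 1 hq r).2) measureReal_nonneg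
  monotoneOn μ := fun r₁ _ r₂ _ h => mul_le_mul_of_nonneg_right
    (hmono (projIcc q 1 hq r₁).2 (projIcc q 1 hq r₂).2 (monotone_projIcc hq h)) measureReal_nonneg
  concaveOn μ := (hconc.smul (measureReal_nonneg (μ := μ) (s := univ))).congr fun r hr => by
    simp only [projIcc_of_mem hq hr, smul_eq_mul, mul_comm]

section DynamicProgramming

variable {E X Θ : Type*} [NormedAddCommGroup E] [NormedSpace ℝ E] [MeasurableSpace X]
  [MeasurableSpace Θ]

/-- The reduced dynamic programming system with horizon `N` and terminal utility `U` for the value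
functions `w k r μ`, in terms of the proportions of wealth. It is only required at the ratios in
`[q, 1]` and at finite beliefs. -/
structure IsValueSystem (M : LearningMarket E X Θ) (N : ℕ) (q : ℝ) (U : ℝ → ℝ)
    (w : ℕ → ℝ → Measure Θ → ℝ) : Prop where
  terminal : ∀ r ∈ Icc q 1, ∀ μ : Measure Θ, IsFiniteMeasure μ → w N r μ = U r * μ.real univ
  step : ∀ k < N, ∀ r ∈ Icc q 1, ∀ μ : Measure Θ, IsFiniteMeasure μ →
    w k r μ = sSup ((fun a => ∫ x, w (k + 1) (min 1 (r * (1 + M.excessReturn x a)))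
      (M.posterior μ x) ∂M.law) '' ((1 - q / r) • M.portfolios))

lemma IsValueSystem.exists_isRegularValue {M : LearningMarket E X Θ} {N : ℕ} {q : ℝ}
    {U : ℝ → ℝ} {w : ℕ → ℝ → Measure Θ → ℝ} (hw : IsValueSystem M N q U w) (hq₀ : 0 < q)
    (hq₁ : q ≤ 1) (hcont : ContinuousOn U (Icc q 1)) (hmono : MonotoneOn U (Icc q 1))
    (hconc : ConcaveOn ℝ (Icc q 1) U) {k : ℕ} (hk : k ≤ N) :
    ∃ F, IsRegularValue q F ∧
      ∀ μ : Measure Θ, IsFiniteMeasure μ → ∀ r ∈ Icc q 1, w k r μ = F r μ := by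
  induction hk using Nat.decreasingInduction with
  | self =>
    refine ⟨_, isRegularValue_terminal hq₁ hcont hmono hconc, fun μ hμ r hr => ?_⟩
    rw [hw.terminal r hr μ hμ, projIcc_of_mem hq₁ hr]
  | of_succ k hk ih =>
    obtain ⟨F, hF, hwF⟩ := ih
    refine ⟨_, hF.indicator_bellman M hq₁, fun μ hμ r hr => ?_⟩
    rw [hw.step k hk r hr μ hμ, ← M.bellman_eq_sSup_proportions q _ (hq₀.trans_le hr.1).ne',
      M.bellman_congr hq₁ hr.1 μ hwF, indicator_of_mem (mem_ofPred.2 hμ)]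

theorem stmt11_general (M : LearningMarket E X Θ) {N : ℕ} {q : ℝ} (hq₀ : 0 < q) (hq₁ : q ≤ 1)
    {U : ℝ → ℝ} (hcont : ContinuousOn U (Icc q 1)) (hmono : MonotoneOn U (Icc q 1))
    (hconc : ConcaveOn ℝ (Icc q 1) U) {w : ℕ → ℝ → Measure Θ → ℝ}
    (hw : IsValueSystem M N q U w) {k : ℕ} (hk : k ≤ N) (μ : Measure Θ) [IsFiniteMeasure μ] :
    ConcaveOn ℝ (Icc q 1) fun r => w k r μ := by
  obtain ⟨F, hF, hwF⟩ := hw.exists_isRegularValue hq₀ hq₁ hcont hmono hconc hk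
  exact (hF.concaveOn μ).congr fun r hr => (hwF μ inferInstance r hr).symm

end DynamicProgramming

section LongOnly

variable {ι : Type*} [Fintype ι]

/-- The portfolios with nonnegative proportions of total at most `c`; the rest of the wealth stays
in cash. -/
def longOnly (ι : Type*) [Fintype ι] (c : ℝ) : Set (ι → ℝ) := {a | (∀ i, 0 ≤ a i) ∧ ∑ i, a i ≤ c}

lemma convex_longOnly (c : ℝ) : Convex ℝ (longOnly ι c) :=
  (convex_Ici 0).inter (convex_halfSpace_le (f := fun a : ι → ℝ => ∑ i, a i)
    ⟨fun a b => Finset.sum_add_distrib, fun t a => by simp [Finset.mul_sum]⟩ c)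

lemma isCompact_longOnly (c : ℝ) : IsCompact (longOnly ι c) := by
  have hsum : IsClosed {a : ι → ℝ | ∑ i, a i ≤ c} := isClosed_le (by fun_prop) continuous_const
  refine (isCompact_Icc (a := 0) (b := fun _ => c)).of_isClosed_subset (isClosed_Ici.inter hsum)
    fun a ha => ⟨ha.1, fun i => ?_⟩
  exact (Finset.single_le_sum (fun j _ => ha.1 j) (Finset.mem_univ i)).trans ha.2

lemma zero_mem_longOnly {c : ℝ} (hc : 0 ≤ c) : (0 : ι → ℝ) ∈ longOnly ι c :=
  ⟨fun _ => le_rfl, by simpa using hc⟩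

lemma smul_longOnly_one {c : ℝ} (hc : 0 ≤ c) : c • longOnly ι 1 = longOnly ι c := by
  refine Subset.antisymm ?_ fun a ha => ?_
  · rintro _ ⟨a, ha, rfl⟩
    refine ⟨fun i => mul_nonneg hc (ha.1 i), ?_⟩
    simp only [Pi.smul_apply, smul_eq_mul, ← Finset.mul_sum]
    exact mul_le_of_le_one_right hc ha.2
  · rcases hc.eq_or_lt with rfl | hc
    · have ha₀ : a = 0 := funext fun i => le_antisymm
        ((Finset.single_le_sum (fun j _ => ha.1 j) (Finset.mem_univ i)).trans ha.2) (ha.1 i)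
      exact ha₀ ▸ zero_mem_smul_set (zero_mem_longOnly zero_le_one)
    · refine (mem_smul_set_iff_inv_smul_mem₀ hc.ne' _ _).2
        ⟨fun i => mul_nonneg (inv_nonneg.2 hc.le) (ha.1 i), ?_⟩
      simp only [Pi.smul_apply, smul_eq_mul, ← Finset.mul_sum]
      exact (inv_mul_le_one₀ hc).2 ha.2

lemma neg_one_le_sum_mul_of_mem_longOnly {a ρ : ι → ℝ} (ha : a ∈ longOnly ι 1)
    (hρ : ∀ i, -1 ≤ ρ i) : -1 ≤ ∑ i, a i * ρ i := by
  calc -1 ≤ ∑ i, a i * -1 := by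
        rw [← Finset.sum_mul]
        linarith [ha.2]
    _ ≤ ∑ i, a i * ρ i := Finset.sum_le_sum fun i _ => mul_le_mul_of_nonneg_left (hρ i) (ha.1 i)

end LongOnly

section LocationMarket

variable {ι : Type*} [Fintype ι] {g : (ι → ℝ) → ℝ}

lemma lintegral_location_likelihood (hg : ∀ x, 0 < g x) (hg_meas : Measurable g)
    (hg_one : ∫⁻ x, ENNReal.ofReal (g x) = 1) (b : ι → ℝ) :
    ∫⁻ x, ENNReal.ofReal (g (x - b) / g x)
      ∂(volume : Measure (ι → ℝ)).withDensity (fun x => ENNReal.ofReal (g x)) = 1 := by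
  rw [lintegral_withDensity_eq_lintegral_mul _ (by fun_prop) (by fun_prop)]
  calc ∫⁻ x, ENNReal.ofReal (g x) * ENNReal.ofReal (g (x - b) / g x)
      = ∫⁻ x, ENNReal.ofReal (g (x - b)) := lintegral_congr fun x => by
        rw [← ENNReal.ofReal_mul (hg x).le, mul_div_cancel₀ _ (hg x).ne']
    _ = ∫⁻ x, ENNReal.ofReal (g x) := 
        lintegral_sub_right_eq_self (fun x => ENNReal.ofReal (g x)) b
    _ = 1 := hg_one

/-- The long-only market whose vector of log-returns is the unknown drift `b` plus a noise of
density `g`. Its reference law is that of the noise itself. -/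
noncomputable def locationMarket (hg : ∀ x, 0 < g x) (hg_meas : Measurable g)
    (hg_one : ∫⁻ x, ENNReal.ofReal (g x) = 1) : LearningMarket (ι → ℝ) (ι → ℝ) (ι → ℝ) where
  portfolios := longOnly ι 1
  isCompact_portfolios := isCompact_longOnly 1
  convex_portfolios := convex_longOnly 1
  zero_mem_portfolios := zero_mem_longOnly zero_le_one
  excessReturn x :=
    (Fintype.linearCombination ℝ fun i => Real.exp (x i) - 1).toContinuousLinearMap
  measurable_excessReturn a := by
    simp only [LinearMap.coe_toContinuousLinearMap', Fintype.linearCombination_apply]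
    fun_prop
  neg_one_le_excessReturn x a ha := neg_one_le_sum_mul_of_mem_longOnly ha fun i => by
    linarith [Real.exp_pos (x i)]
  law := volume.withDensity fun x => ENNReal.ofReal (g x)
  sFinite_law := inferInstance
  likelihood x b := ENNReal.ofReal (g (x - b) / g x)
  measurable_likelihood := by
    unfold Function.uncurry
    fun_prop
  lintegral_likelihood := lintegral_location_likelihood hg hg_meas hg_one

lemma locationMarket_portfolios (hg : ∀ x, 0 < g x) (hg_meas : Measurable g)
    (hg_one : ∫⁻ x, ENNReal.ofReal (g x) = 1) :
    (locationMarket hg hg_meas hg_one).portfolios = longOnly ι 1 := rfl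

lemma isValueSystem_locationMarket {hg : ∀ x, 0 < g x} {hg_meas : Measurable g}
    {hg_one : ∫⁻ x, ENNReal.ofReal (g x) = 1} {N : ℕ} {q : ℝ} (hq : 0 < q) {U : ℝ → ℝ}
    {w : ℕ → ℝ → Measure (ι → ℝ) → ℝ}
    (hterminal : ∀ r ∈ Icc q 1, ∀ μ : Measure (ι → ℝ), IsFiniteMeasure μ →
      w N r μ = U r * μ.real univ)
    (hstep : ∀ k < N, ∀ r ∈ Icc q 1, ∀ μ : Measure (ι → ℝ), IsFiniteMeasure μ →
      w k r μ = ⨆ a : longOnly ι (1 - q / r),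
        ∫ x, w (k + 1) (min 1 (r * (1 + ∑ i, (a : ι → ℝ) i * (Real.exp (x i) - 1))))
          (μ.withDensity fun b => ENNReal.ofReal (g (x - b) / g x))
          ∂(volume.withDensity fun x => ENNReal.ofReal (g x))) :
    IsValueSystem (locationMarket hg hg_meas hg_one) N q U w := by
  refine ⟨hterminal, fun k hk r hr μ hμ => ?_⟩
  have hcushion : 0 ≤ 1 - q / r := sub_nonneg.2 ((div_le_one (hq.trans_le hr.1)).2 hr.1)
  rw [hstep k hk r hr μ hμ, locationMarket_portfolios, smul_longOnly_one hcushion, sSup_image']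
  rfl

end LocationMarket

/-- the reduced value functions `w_k` (with `U` concave and nondecreasing)
are concave in the ratio variable `r ∈ [q,1]`. -/
theorem stmt11 (d N : ℕ) (q : ℝ) (hq : q ∈ Set.Ioo (0 : ℝ) 1)
    (U : ℝ → ℝ) (hU : MonotoneOn U (Set.Ioi (0 : ℝ))) (hUconc : ConcaveOn ℝ (Set.Ioi (0 : ℝ)) U)
    (g : (Fin d → ℝ) → ℝ) (hg : ∀ r, 0 < g r) (hg_meas : Measurable g)
    (ν : Measure (Fin d → ℝ)) [IsProbabilityMeasure ν]
    (hν : ν = (volume : Measure (Fin d → ℝ)).withDensity fun r => ENNReal.ofReal (g r))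
    (w : ℕ → ℝ → Measure (Fin d → ℝ) → ℝ)
    (hwN : ∀ r : ℝ, ∀ μ : Measure (Fin d → ℝ), w N r μ = U r * (μ Set.univ).toReal)
    (hrec : ∀ k < N, ∀ r ∈ Set.Icc q 1, ∀ μ : Measure (Fin d → ℝ), IsFiniteMeasure μ →
      w k r μ = ⨆ a : {a : Fin d → ℝ // (∀ i, 0 ≤ a i) ∧ ∑ i, a i ≤ 1 - q / r},
        ∫ x, w (k + 1)
            (min 1 (r * (1 + ∑ i, (a : Fin d → ℝ) i * (Real.exp (x i) - 1))))
            (μ.withDensity fun b => ENNReal.ofReal (g (x - b) / g x)) ∂ν) :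
    ∀ k ≤ N, ∀ μ : Measure (Fin d → ℝ), IsFiniteMeasure μ →
      ∀ r1 ∈ Set.Icc q 1, ∀ r2 ∈ Set.Icc q 1, ∀ lam ∈ Set.Ioo (0 : ℝ) 1,
        lam * w k r1 μ + (1 - lam) * w k r2 μ ≤ w k (lam * r1 + (1 - lam) * r2) μ := by
  intro k hk μ _ r1 hr1 r2 hr2 lam hlam
  subst hν
  have hg_one : ∫⁻ x, ENNReal.ofReal (g x) = 1 := by
    rw [← setLIntegral_univ, ← withDensity_apply _ .univ, measure_univ]
  have hsystem : IsValueSystem (locationMarket hg hg_meas hg_one) N q U w :=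
    isValueSystem_locationMarket hq.1 (fun r _ μ _ => hwN r μ) hrec
  have hpos : Icc q 1 ⊆ Ioi 0 := fun r hr => hq.1.trans_le hr.1
  exact (stmt11_general _ hq.1 hq.2.le ((hUconc.continuousOn isOpen_Ioi).mono hpos) (hU.mono hpos)
    (hUconc.subset hpos (convex_Icc q 1)) hsystem hk μ).2 hr1 hr2 hlam.1.le
    (sub_nonneg.2 hlam.2.le) (add_sub_cancel lam 1)
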